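/- arXiv:1507.01934 — 2 statements merged into one kernel-verified Lean document; each statement's English description precedes it below -/
import Mathlib

section
/- For all positive integers h and k there is a positive integer f(h,k) such that every h-semicomplete digraph with pathwidth at least f(h,k) contains a semicomplete subgraph (an induced subgraph on some vertex subset that is 0-semicomplete) whose pathwidth is at least k. -/
namespace AlmostSemicomplete

variable {V : Type} [Fintype V] [DecidableEq V]

/-- The closed out-neighborhood `N⁺[U]`. -/
def closedOut (E : V → V → Prop) [DecidableRel E] (U : Finset V) : Finset V :=
  U.biUnion fun u => insert u (Finset.univ.filter fun w => E u w)

/-- The closed in-neighborhood `N⁻[U]`. -/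
def closedIn (E : V → V → Prop) [DecidableRel E] (U : Finset V) : Finset V :=
  U.biUnion fun u => insert u (Finset.univ.filter fun w => E w u)

/-- The open out-neighborhood `N⁺(U)`. -/
def openOut (E : V → V → Prop) [DecidableRel E] (U : Finset V) : Finset V :=
  closedOut E U \ U

/-- The open in-neighborhood `N⁻(U)`. -/
def openIn (E : V → V → Prop) [DecidableRel E] (U : Finset V) : Finset V :=
  closedIn E U \ U

/-- `d⁺(U)`, the number of out-neighbors of the set `U`. -/
def dOut (E : V → V → Prop) [DecidableRel E] (U : Finset V) : ℕ := (openOut E U).card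

/-- `d⁻(U)`, the number of in-neighbors of the set `U`. -/
def dIn (E : V → V → Prop) [DecidableRel E] (U : Finset V) : ℕ := (openIn E U).card

/-- Out-neighbors of a vertex. -/
def NoutV (E : V → V → Prop) [DecidableRel E] (v : V) : Finset V :=
  Finset.univ.filter fun w => E v w

/-- In-neighbors of a vertex. -/
def NinV (E : V → V → Prop) [DecidableRel E] (v : V) : Finset V :=
  Finset.univ.filter fun w => E w v

/-- Out-degree of a vertex. -/
def dOutV (E : V → V → Prop) [DecidableRel E] (v : V) : ℕ := (NoutV E v).card

/-- In-degree of a vertex. -/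
def dInV (E : V → V → Prop) [DecidableRel E] (v : V) : ℕ := (NinV E v).card

/-- A separation of a digraph: `A ∪ B = V` and no edge from `A ∖ B` to `B ∖ A`. -/
def IsSep (E : V → V → Prop) (A B : Finset V) : Prop :=
  A ∪ B = Finset.univ ∧ ∀ a ∈ A, a ∉ B → ∀ b ∈ B, b ∉ A → ¬ E a b

/-- An `S`–`T` separation. -/
def IsSTSep (E : V → V → Prop) (S T A B : Finset V) : Prop :=
  IsSep E A B ∧ S ∩ B = ∅ ∧ T ∩ A = ∅

/-- A minimum `S`–`T` separation, i.e. one of smallest order `|A ∩ B|`. -/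
def IsMinSTSep (E : V → V → Prop) (S T X Y : Finset V) : Prop :=
  IsSTSep E S T X Y ∧ ∀ A B : Finset V, IsSTSep E S T A B → (X ∩ Y).card ≤ (A ∩ B).card

/-- A separation chain: a list of separations with the first components nondecreasing
and the second components nonincreasing. -/
def IsSepChain (E : V → V → Prop) (C : List (Finset V × Finset V)) : Prop :=
  (∀ p ∈ C, IsSep E p.1 p.2) ∧ List.Chain' (fun p q => p.1 ⊆ q.1 ∧ q.2 ⊆ p.2) C

/-- A separation chain is gapless if consecutive separations differ by at most one vertex
on at least one side. -/
def Gapless (C : List (Finset V × Finset V)) : Prop :=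
  List.Chain' (fun p q => (q.1 \ p.1).card ≤ 1 ∨ (p.2 \ q.2).card ≤ 1) C

/-- A separation chain is nice if consecutive separations differ by at most one vertex
on both sides. -/
def Nice (C : List (Finset V × Finset V)) : Prop :=
  List.Chain' (fun p q => (q.1 \ p.1).card ≤ 1 ∧ (p.2 \ q.2).card ≤ 1) C

/-- An `S`–`T` chain: a separation chain whose first separation has second component
`V ∖ S` and whose last separation has first component `V ∖ T`. -/
def IsSTChain (E : V → V → Prop) (S T : Finset V) (C : List (Finset V × Finset V)) : Prop :=
  IsSepChain E C ∧ C.head?.map Prod.snd = some (Finset.univ \ S) ∧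
    C.getLast?.map Prod.fst = some (Finset.univ \ T)

/-- An `S`–`T` chain is tight if `A_0 = N⁺[S]` and `B_r = N⁻[T]`. -/
def Tight (E : V → V → Prop) [DecidableRel E] (S T : Finset V)
    (C : List (Finset V × Finset V)) : Prop :=
  C.head?.map Prod.fst = some (closedOut E S) ∧
    C.getLast?.map Prod.snd = some (closedIn E T)

/-- The order of a separation chain: the maximum order of its member separations. -/
def chainOrder (C : List (Finset V × Finset V)) : ℕ :=
  (C.map fun p => (p.1 ∩ p.2).card).foldr max 0

/-- The chain has order at most `k`. -/
def orderLE (C : List (Finset V × Finset V)) (k : ℕ) : Prop :=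
  ∀ p ∈ C, (p.1 ∩ p.2).card ≤ k

/-- A path decomposition of a digraph. -/
def IsPathDecomp {m : ℕ} (E : V → V → Prop) (X : Fin m → Finset V) : Prop :=
  (∀ v : V, ∃ i, v ∈ X i) ∧
  (∀ u v : V, E u v → ∃ i j : Fin m, j ≤ i ∧ u ∈ X i ∧ v ∈ X j) ∧
  (∀ (v : V) (i j k : Fin m), i ≤ j → j ≤ k → v ∈ X i → v ∈ X k → v ∈ X j)

/-- The width of a path decomposition: maximum bag size minus one. -/
def pdWidth {m : ℕ} (X : Fin m → Finset V) : ℕ :=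
  (Finset.univ.sup fun i => (X i).card) - 1

/-- The pathwidth of a digraph. -/
noncomputable def pathwidth (E : V → V → Prop) : ℕ :=
  sInf {k | ∃ (m : ℕ) (X : Fin m → Finset V), IsPathDecomp E X ∧ pdWidth X = k}

/-- An `h`-semicomplete digraph: every vertex has at most `h` non-neighbors. -/
def HSemicomplete (E : V → V → Prop) [DecidableRel E] (h : ℕ) : Prop :=
  ∀ v : V, (Finset.univ.filter fun u => u ≠ v ∧ ¬ E u v ∧ ¬ E v u).card ≤ h

/-- A semicomplete digraph: between any two distinct vertices there is an edge in
at least one direction. -/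
def Semicomplete (E : V → V → Prop) : Prop := ∀ u v : V, u ≠ v → E u v ∨ E v u

/-- A `k`-admissible pair `(S, T)`. -/
def kAdmissible (E : V → V → Prop) [DecidableRel E] (k : ℕ) (S T : Finset V) : Prop :=
  closedOut E S ∩ T = ∅ ∧ dOut E S ≤ k ∧ dIn E T ≤ k

/-- The potential `μ(S,T) = 2|V ∖ (N⁺[S] ∪ N⁻[T])| + |N⁺(S) Δ N⁻(T)|`. -/
def mu (E : V → V → Prop) [DecidableRel E] (S T : Finset V) : ℕ :=
  2 * (Finset.univ \ (closedOut E S ∪ closedIn E T)).card +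
    (symmDiff (openOut E S) (openIn E T)).card

/-- The wildness of a vertex. -/
def wld (E : V → V → Prop) [DecidableRel E] (v : V) : ℕ :=
  ((Finset.univ.filter fun u => dOutV E u ≤ dOutV E v) \ NoutV E v).card

/-- A `(d, l, k)`-degree tangle. -/
def IsDegTangle (E : V → V → Prop) [DecidableRel E] (d l k : ℕ) (T : Finset V) : Prop :=
  T.card = l ∧ ∀ v ∈ T, d ≤ dOutV E v ∧ dOutV E v ≤ d + k

/-- A `(d, l, k)`-matching tangle. -/
def IsMatchTangle (E : V → V → Prop) [DecidableRel E] (d l k : ℕ)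
    (T₁ T₂ : Finset V) : Prop :=
  T₁.card = l ∧ T₂.card = l ∧ (∀ v ∈ T₁, dOutV E v ≤ d) ∧
    (∀ v ∈ T₂, d + k + 1 ≤ dOutV E v) ∧
    ∃ φ : V → V, Set.BijOn φ ↑T₁ ↑T₂ ∧ ∀ v ∈ T₁, E v (φ v)

/-- A `(d, l, w)`-spider. -/
def IsSpider (E : V → V → Prop) [DecidableRel E] (d l w : ℕ) (T : Finset V)
    (L R : V → Finset V) : Prop :=
  l ≤ T.card ∧ ∀ v ∈ T,
    L v ⊆ NinV E v ∧ 3 * l ≤ (L v).card ∧ (∀ u ∈ L v, dOutV E u ≤ d) ∧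
    R v ⊆ NoutV E v ∧ 3 * l ≤ (R v).card ∧ (∀ u ∈ R v, d + w ≤ dOutV E u)

/-- Tameness of a left-side vertex of a `(d,l,w)`-spider:
`wld(u) ≤ 3l + d + w − d⁺(u) + 2·pw(G)`, stated additively. -/
def LeftTame (E : V → V → Prop) [DecidableRel E] (d l w : ℕ) (u : V) : Prop :=
  wld E u + dOutV E u ≤ 3 * l + d + w + 2 * pathwidth E

/-- Tameness of a right-side vertex of a `(d,l,w)`-spider:
`wld(u) ≤ 3l + d⁺(u) − d + 2·pw(G)`, stated additively. -/
def RightTame (E : V → V → Prop) [DecidableRel E] (d l w : ℕ) (u : V) : Prop :=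
  wld E u + d ≤ 3 * l + dOutV E u + 2 * pathwidth E

/-- A tame `(d, l, w)`-spider: each `L_v` and each `R_v` contains at least `2l`
tame vertices. -/
def IsTameSpider (E : V → V → Prop) [DecidableRel E] (d l w : ℕ) (T : Finset V)
    (L R : V → Finset V) : Prop :=
  IsSpider E d l w T L R ∧ ∀ v ∈ T,
    (∃ L' ⊆ L v, 2 * l ≤ L'.card ∧ ∀ u ∈ L', LeftTame E d l w u) ∧
    (∃ R' ⊆ R v, 2 * l ≤ R'.card ∧ ∀ u ∈ R', RightTame E d l w u)

/-!
Consider a linked family: many disjoint edges or vertices such that many paths of length two lead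
from the head of each to the tail of every other. Linked families force large pathwidth, and in an
`h`-semicomplete digraph such a family survives the passage to a suitable clique: a vertex excludes
at most `h` others, so one can greedily select members that are mutually adjacent, and then inner
vertices of the paths between them. It remains to find a linked family when the pathwidth is large.
If many out-neighbors of `u` are not out-neighbors of `v`, then all but at most `h + 1` of these lie
on paths of length two from `u` to `v`. This turns matching tangles and large degree tangles into
linked families. Without either kind of tangle, minimum vertex covers of the bipartite graphs from
the vertices of out-degree less than `t` to those of out-degree at least `t + K` are small by
Kőnig's theorem, and they yield a path decomposition of small width.
-/

open Finset Relation

section Combinatorics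

variable {α β : Type*}

lemma card_le_card_of_pairwise_disjoint {s : α → Set β}
    (hs : Pairwise (Function.onFun Disjoint s)) {A : Finset α} {B : Finset β}
    (h : ∀ a ∈ A, ∃ b ∈ B, b ∈ s a) : #A ≤ #B :=
  card_le_card_of_forall_subsingleton (fun a b ↦ b ∈ s a) h fun _ _ _ ha _ ha' ↦
    hs.eq (Set.not_disjoint_iff.2 ⟨_, ha.2, ha'.2⟩)

lemma exists_subset_card_eq_pairwise_not {r : α → α → Prop} [DecidableRel r] [Std.Symm r]
    {s : Finset α} {D n : ℕ} (hD : ∀ a ∈ s, #{b ∈ s | r a b} ≤ D) (hn : n * (D + 1) ≤ #s) :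
    ∃ t ⊆ s, #t = n ∧ (t : Set α).Pairwise fun a b ↦ ¬ r a b := by
  classical
  induction n with
  | zero => exact ⟨∅, by simp⟩
  | succ n ih =>
    rw [Nat.succ_mul] at hn
    obtain ⟨t, hts, rfl, ht⟩ := ih (by omega)
    have hblocked : #(t.biUnion fun a ↦ insert a {b ∈ s | r a b}) ≤ #t * (D + 1) :=
      card_biUnion_le_card_mul _ _ _ fun a ha ↦
        (card_insert_le _ _).trans (Nat.succ_le_succ (hD a (hts ha)))
    obtain ⟨b, hb, hbt⟩ := exists_mem_notMem_of_card_lt_card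
      (hblocked.trans_lt (show #t * (D + 1) < #s by omega))
    simp only [mem_biUnion, mem_insert, mem_filter, not_exists, not_and, not_or] at hbt
    have hb_notMem : b ∉ t := fun h ↦ (hbt b h).1 rfl
    have : Std.Symm fun a b ↦ ¬ r a b := ⟨fun a b h h' ↦ h (symm h')⟩
    refine ⟨insert b t, insert_subset hb hts, card_insert_of_notMem hb_notMem, ?_⟩
    rw [coe_insert, Set.pairwise_insert_of_symm]
    exact ⟨ht, fun a ha _ h ↦ (hbt a ha).2 hb (symm h)⟩

lemma card_le_two_mul_card_filter_card_le {r : α → α → Prop} [DecidableRel r] {s : Finset α}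
    {Q : ℕ} (hQ : ∀ a ∈ s, #{b ∈ s | r a b} ≤ Q) :
    #s ≤ 2 * #{b ∈ s | #{a ∈ s | r a b} ≤ 2 * Q} := by
  have hsplit := card_filter_add_card_filter_not (s := s) fun b ↦ #{a ∈ s | r a b} ≤ 2 * Q
  set B : Finset α := {b ∈ s | ¬ #{a ∈ s | r a b} ≤ 2 * Q}
  have hB : #B * (2 * Q + 1) ≤ #s * Q :=
    card_mul_le_card_mul (fun b a ↦ r a b)
      (fun b hb ↦ not_le.1 (mem_filter.1 hb).2)
      (fun a ha ↦ (card_le_card (filter_subset_filter _ (filter_subset _ _))).trans (hQ a ha))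
  have : 2 * #B ≤ #s := by
    by_contra! hlt
    nlinarith [Nat.mul_le_mul_right Q hlt.le]
  omega

lemma card_add_card_le_card_add_card [DecidableEq α] {s t u v : Finset α}
    (hunion : s ∪ t ⊆ u ∪ v) (hinter : s ∩ t ⊆ u ∩ v) : #s + #t ≤ #u + #v := by
  rw [← card_union_add_card_inter s, ← card_union_add_card_inter u]
  exact Nat.add_le_add (card_le_card hunion) (card_le_card hinter)

/-- For the bipartite graph between `L` and `H` with adjacency `N`, the size of the vertex cover
`N(S) ∩ H ∪ L \ S` attached to `S ⊆ L`. Every minimal vertex cover is of this form, so the minimum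
over `S` is the one in Kőnig's theorem. -/
def coverSize [DecidableEq α] [DecidableEq β] (N : α → Finset β) (L : Finset α) (H : Finset β)
    (S : Finset α) : ℕ :=
  #(S.biUnion N ∩ H) + #(L \ S)

/-- `S ⊆ L` gives a minimum vertex cover of the bipartite graph between `L` and `H`. -/
def IsMinCover [DecidableEq α] [DecidableEq β] (N : α → Finset β) (L : Finset α) (H : Finset β)
    (S : Finset α) : Prop :=
  S ⊆ L ∧ ∀ T ⊆ L, coverSize N L H S ≤ coverSize N L H T

variable [DecidableEq α] [DecidableEq β] {N : α → Finset β} {L L' S T : Finset α}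
  {H H' : Finset β}

-- Hall's theorem, after adding `#L - g` new vertices to `H`, all adjacent to the whole of `L`.
lemma exists_matching_of_forall_le_coverSize [Nonempty β] {g : ℕ}
    (hg : ∀ S ⊆ L, g ≤ coverSize N L H S) :
    ∃ A ⊆ L, g ≤ #A ∧ ∃ φ : α → β, Set.InjOn φ A ∧ ∀ a ∈ A, φ a ∈ N a ∩ H := by
  let t (a : L) : Finset (β ⊕ Fin (#L - g)) := (N a ∩ H).disjSum univ
  have hall (s : Finset L) : #s ≤ #(s.biUnion t) := by
    obtain rfl | ⟨a₀, ha₀⟩ := s.eq_empty_or_nonempty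
    · simp
    have hsub : s.map (.subtype _) ⊆ L := map_subtype_subset s
    have ht : s.biUnion t = ((s.map (.subtype _)).biUnion N ∩ H).disjSum univ := by
      ext (b | b)
      · simp [t, ← exists_and_right, and_assoc]
      · simpa [t] using ⟨_, _, ha₀⟩
    have h_cover := hg _ hsub
    have h_sdiff := card_sdiff_add_card_eq_card hsub
    rw [coverSize] at h_cover
    rw [card_map] at h_sdiff
    rw [ht, card_disjSum, card_fin]
    omega
  obtain ⟨f, hf, hft⟩ := (all_card_le_biUnion_card_iff_exists_injective t).1 hall
  let A : Finset L := {a | (f a).isLeft}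
  have hA : #L ≤ #A + (#L - g) := by
    have hrest : #{a : L | ¬ (f a).isLeft} ≤ #((univ : Finset (Fin (#L - g))).map
        (.inr (α := β))) :=
      card_le_card_of_injOn f (fun a ha ↦ by cases hfa : f a <;> simp_all) hf.injOn
    have hsplit := card_filter_add_card_filter_not (s := (univ : Finset L)) fun a ↦ (f a).isLeft
    rw [card_map, card_fin] at hrest
    rw [card_univ, Fintype.card_coe] at hsplit
    simp only [A]
    omega
  have hgL : g ≤ #L := by simpa [coverSize] using hg ∅ (empty_subset _)
  let φ (a : α) : β :=
    if ha : a ∈ L then (f ⟨a, ha⟩).elim id fun _ ↦ Classical.arbitrary β else Classical.arbitrary β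
  have hφ {a : L} (ha : a ∈ A) : f a = .inl (φ a) := by
    cases hfa : f a <;> simp_all [A, φ]
  refine ⟨A.map (.subtype _), map_subtype_subset A, by rw [card_map]; omega, φ, ?_, ?_⟩
  · simp only [coe_map]
    rintro _ ⟨a, ha, rfl⟩ _ ⟨b, hb, rfl⟩ hab
    exact congrArg Subtype.val (hf ((hφ ha).trans ((congrArg _ hab).trans (hφ hb).symm)))
  · simp only [mem_map]
    rintro _ ⟨a, ha, rfl⟩
    simpa [t, hφ ha] using hft a

lemma coverSize_union_add_coverSize_inter_le (hL : L ⊆ L') (hH : H' ⊆ H) :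
    coverSize N L' H' (S ∪ T) + coverSize N L H (S ∩ T) ≤
      coverSize N L H S + coverSize N L' H' T := by
  have h_nbr : #((S ∪ T).biUnion N ∩ H') + #((S ∩ T).biUnion N ∩ H) ≤
      #(S.biUnion N ∩ H) + #(T.biUnion N ∩ H') := by
    apply card_add_card_le_card_add_card <;> intro b <;>
      simp only [mem_union, mem_inter, mem_biUnion] <;> grind
  have h_rest : #(L' \ (S ∪ T)) + #(L \ (S ∩ T)) ≤ #(L \ S) + #(L' \ T) := by
    apply card_add_card_le_card_add_card <;> grind
  simp only [coverSize]
  omega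

lemma exists_maximal_isMinCover (N : α → Finset β) (L : Finset α) (H : Finset β) :
    ∃ S, Maximal (IsMinCover N L H) S := by
  obtain ⟨S, hS, hmin⟩ := exists_min_image L.powerset (coverSize N L H) (powerset_nonempty L)
  refine Set.Finite.exists_maximal (s := {S | IsMinCover N L H S})
    (L.powerset.finite_toSet.subset fun S hS ↦ by simpa using hS.1) ⟨S, ?_, fun T hT ↦ ?_⟩
  · simpa using hS
  · exact hmin T (mem_powerset.2 hT)

lemma IsMinCover.subset_of_maximal (hS : IsMinCover N L H S)
    (hT : Maximal (IsMinCover N L' H') T) (hL : L ⊆ L') (hH : H' ⊆ H) : S ⊆ T := by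
  have h_inter := hS.2 (S ∩ T) (inter_subset_left.trans hS.1)
  have h_cross := coverSize_union_add_coverSize_inter_le (N := N) (S := S) (T := T) hL hH
  have h_union : coverSize N L' H' (S ∪ T) ≤ coverSize N L' H' T := by omega
  have : IsMinCover N L' H' (S ∪ T) :=
    ⟨union_subset (hS.1.trans hL) hT.prop.1, fun U hU ↦ h_union.trans (hT.prop.2 U hU)⟩
  exact subset_union_left.trans (hT.le_of_ge this subset_union_right)

end Combinatorics

section PathDecomposition

variable {E : V → V → Prop} {m : ℕ} {X : Fin m → Finset V}

omit [Fintype V] [DecidableEq V]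

lemma pathwidth_le_of_forall_card_le {w : ℕ} (hX : IsPathDecomp E X) (hw : ∀ t, #(X t) ≤ w + 1) :
    pathwidth E ≤ w :=
  (show pathwidth E ≤ pdWidth X from Nat.sInf_le ⟨m, X, hX, rfl⟩).trans
    (Nat.sub_le_iff_le_add.2 (Finset.sup_le fun t _ ↦ hw t))

lemma le_pathwidth_of_forall_exists_le_card [Finite V] {k : ℕ}
    (h : ∀ (m : ℕ) (X : Fin m → Finset V), IsPathDecomp E X → ∃ t, k + 1 ≤ #(X t)) :
    k ≤ pathwidth E := by
  have := Fintype.ofFinite V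
  have hone : IsPathDecomp E fun _ : Fin 1 ↦ univ :=
    ⟨fun v ↦ ⟨0, mem_univ v⟩, fun u v _ ↦ ⟨0, 0, le_rfl, mem_univ u, mem_univ v⟩,
      fun v _ _ _ _ _ _ _ ↦ mem_univ v⟩
  obtain ⟨m, X, hX, hw⟩ := Nat.sInf_mem (s := {k | ∃ (m : ℕ) (X : Fin m → Finset V),
    IsPathDecomp E X ∧ pdWidth X = k}) ⟨_, 1, _, hone, rfl⟩
  obtain ⟨t, ht⟩ := h m X hX
  change k ≤ sInf _
  rw [← hw]
  exact Nat.le_sub_of_add_le (ht.trans (le_sup (f := fun t ↦ #(X t)) (mem_univ t)))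

lemma IsPathDecomp.exists_forall_mem_iff (hX : IsPathDecomp E X) :
    ∃ l r : V → Fin m, (∀ v t, v ∈ X t ↔ t ∈ Set.Icc (l v) (r v)) ∧ (∀ v, l v ≤ r v) ∧
      ∀ u v, E u v → l v ≤ r u := by
  obtain ⟨hcover, hedge, hconvex⟩ := hX
  have hleft (v : V) := Set.exists_min_image {t | v ∈ X t} id (Set.toFinite _) (hcover v)
  have hright (v : V) := Set.exists_max_image {t | v ∈ X t} id (Set.toFinite _) (hcover v)
  choose l hl hl_le using hleft
  choose r hr hle_r using hright
  refine ⟨l, r, fun v t ↦ ⟨fun ht ↦ ⟨hl_le v t ht, hle_r v t ht⟩, fun ht ↦ ?_⟩,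
    fun v ↦ hl_le v _ (hr v), fun u v huv ↦ ?_⟩
  · exact hconvex v _ t _ ht.1 ht.2 (hl v) (hr v)
  · obtain ⟨i, j, hji, hi, hj⟩ := hedge u v huv
    exact (hl_le v j hj).trans (hji.trans (hle_r u i hi))

lemma mem_closedOut [Fintype V] [DecidableEq V] [DecidableRel E] {U : Finset V} {v : V} :
    v ∈ closedOut E U ↔ v ∈ U ∨ ∃ u ∈ U, E u v := by
  simp only [closedOut, mem_biUnion, mem_insert, mem_filter, mem_univ, true_and]
  grind

lemma isPathDecomp_of_monotone [Fintype V] [DecidableEq V] [DecidableRel E]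
    {D : ℕ → Finset V} (hD : Monotone D) (hzero : D 0 = ∅) (hm : D m = univ) :
    IsPathDecomp E fun t : Fin m ↦ closedOut E (D (t + 1)) \ D t := by
  have henter (v : V) : ∃ t < m, v ∈ D (t + 1) ∧ v ∉ D t := by
    obtain ⟨t, ht, ht'⟩ := Nat.exists_not_and_succ_of_not_zero_of_exists
      (p := fun t ↦ v ∈ D t) (by simp [hzero]) ⟨m, by simp [hm]⟩
    exact ⟨t, not_le.1 fun hmt ↦ ht (hD hmt (by simp [hm])), ht', ht⟩
  refine ⟨fun v ↦ ?_, fun u v huv ↦ ?_, fun v i j k hij hjk hi hk ↦ ?_⟩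
  · obtain ⟨t, htm, ht⟩ := henter v
    exact ⟨⟨t, htm⟩, by simp [mem_closedOut, ht]⟩
  · obtain ⟨i, him, hi, hi'⟩ := henter u
    obtain ⟨j, hjm, hj, hj'⟩ := henter v
    refine ⟨⟨i, him⟩, ⟨min i j, by omega⟩, min_le_left i j, ?_, ?_⟩
    · simp [mem_closedOut, hi, hi']
    · have hv : v ∉ D (min i j) := fun h ↦ hj' (hD (min_le_right i j) h)
      obtain h | h := le_total i j
      · simpa [mem_closedOut, h, hj'] using
          ⟨.inr ⟨u, hi, huv⟩, by simpa [h] using hv⟩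
      · simp [mem_closedOut, h, hj, hj']
  · simp only [mem_sdiff, mem_closedOut] at hi hk ⊢
    have hij' : D (i + 1) ⊆ D (j + 1) := hD (by simpa using hij)
    exact ⟨hi.1.imp (hij' ·) fun ⟨u, hu, huv⟩ ↦ ⟨u, hij' hu, huv⟩,
      fun h ↦ hk.2 (hD hjk h)⟩

end PathDecomposition

section LinkedFamily

open Function

variable {E : V → V → Prop} [DecidableRel E] {ι κ : Type*} {P k m : ℕ} {x y : ι → V}

omit [DecidableEq V]

/-- The inner vertices of the directed paths of length two from `u` to `v`. -/
def midpoints (E : V → V → Prop) [DecidableRel E] (u v : V) : Finset V :=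
  {w | E u w ∧ E w v}

/-- Disjoint pairs `(x i, y i)`, each an edge from `x i` to `y i` or a single vertex `x i = y i`,
such that there are at least `P` paths of length two from `y i` to `x j` whenever `i ≠ j`. This is
the obstruction to small pathwidth that degree tangles and matching tangles have in common. -/
structure IsLinkedFamily (E : V → V → Prop) [DecidableRel E] (P : ℕ) (x y : ι → V) : Prop where
  eq_or_edge : ∀ i, x i = y i ∨ E (x i) (y i)
  disjoint : Pairwise (Disjoint on fun i ↦ ({x i, y i} : Set V))
  le_card_midpoints : Pairwise fun i j ↦ P ≤ #(midpoints E (y i) (x j))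

lemma IsLinkedFamily.comp_injective (h : IsLinkedFamily E P x y) {f : κ → ι} (hf : Injective f) :
    IsLinkedFamily E P (x ∘ f) (y ∘ f) :=
  ⟨fun i ↦ h.eq_or_edge (f i), h.disjoint.comp_of_injective hf,
    h.le_card_midpoints.comp_of_injective hf⟩

lemma IsLinkedFamily.exists_fin [Fintype ι] (h : IsLinkedFamily E P x y) {n : ℕ}
    (hn : n ≤ Fintype.card ι) : ∃ x y : Fin n → V, IsLinkedFamily E P x y := by
  obtain ⟨f⟩ := Embedding.nonempty_of_card_le (α := Fin n) (β := ι) (by simpa using hn)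
  exact ⟨_, _, h.comp_injective f.injective⟩

-- If two pairs are not linked in the decomposition, the bag where the first one ends contains all
-- the paths between them; otherwise the bag where some `y j` ends first meets every pair.
lemma IsLinkedFamily.exists_le_card_bag [Fintype ι] [Nonempty ι] (h : IsLinkedFamily E P x y)
    {X : Fin m → Finset V} (hX : IsPathDecomp E X) :
    ∃ t, P ≤ #(X t) ∨ Fintype.card ι ≤ #(X t) := by
  obtain ⟨l, r, hmem, hlr, hedge⟩ := hX.exists_forall_mem_iff
  by_cases hsep : ∃ i j, i ≠ j ∧ r (y i) < l (x j)
  · obtain ⟨i, j, hij, hlt⟩ := hsep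
    refine ⟨r (y i), .inl ((h.le_card_midpoints hij).trans (card_le_card fun w hw ↦ ?_))⟩
    obtain ⟨hyw, hwx⟩ : E (y i) w ∧ E w (x j) := by simpa [midpoints] using hw
    exact (hmem w _).2 ⟨hedge _ _ hyw, hlt.le.trans (hedge _ _ hwx)⟩
  · push Not at hsep
    obtain ⟨j, hj⟩ := Finite.exists_min (r ∘ y)
    have hmeet (i : ι) : ∃ v ∈ X (r (y j)), v ∈ ({x i, y i} : Set V) := by
      obtain rfl | hij := eq_or_ne i j
      · exact ⟨y i, (hmem _ _).2 ⟨hlr _, le_rfl⟩, by simp⟩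
      have hx := hsep j i hij.symm
      obtain hle | hlt := le_or_gt (r (y j)) (r (x i))
      · exact ⟨x i, (hmem _ _).2 ⟨hx, hle⟩, by simp⟩
      · refine ⟨y i, (hmem _ _).2 ⟨?_, hj i⟩, by simp⟩
        obtain heq | hE := h.eq_or_edge i
        · exact heq ▸ hx
        · exact (hedge _ _ hE).trans hlt.le
    exact ⟨r (y j), .inr (card_le_card_of_pairwise_disjoint h.disjoint fun i _ ↦ hmeet i)⟩

lemma IsLinkedFamily.le_pathwidth [Fintype ι] (h : IsLinkedFamily E (k + 1) x y)
    (hk : k + 1 ≤ Fintype.card ι) : k ≤ pathwidth E := by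
  have : Nonempty ι := Fintype.card_pos_iff.1 (by omega)
  refine le_pathwidth_of_forall_exists_le_card fun m X hX ↦ ?_
  obtain ⟨t, ht | ht⟩ := h.exists_le_card_bag hX
  exacts [⟨t, ht⟩, ⟨t, hk.trans ht⟩]

lemma IsLinkedFamily.induce [DecidableEq V] {Q : ℕ} (h : IsLinkedFamily E P x y) {W : Finset V}
    (hx : ∀ i, x i ∈ W) (hy : ∀ i, y i ∈ W)
    (hW : Pairwise fun i j ↦ Q ≤ #(midpoints E (y i) (x j) ∩ W)) :
    IsLinkedFamily (fun a b : {v // v ∈ W} ↦ E a b) Q (fun i ↦ ⟨x i, hx i⟩)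
      (fun i ↦ ⟨y i, hy i⟩) where
  eq_or_edge i := by simpa using h.eq_or_edge i
  disjoint i j hij := by
    simpa [onFun, Set.disjoint_left] using h.disjoint hij
  le_card_midpoints i j hij := by
    refine (hW hij).trans (card_le_card_of_surjOn Subtype.val fun w hw ↦ ?_)
    simpa [midpoints] using hw

end LinkedFamily

section Extraction

variable {E : V → V → Prop} [DecidableRel E] {h k P : ℕ} {W : Finset V}

/-- The non-neighbors of `v`, in the form in which `HSemicomplete` counts them. -/
def nonNeighbors (E : V → V → Prop) [DecidableRel E] (v : V) : Finset V :=
  {u | u ≠ v ∧ ¬ E u v ∧ ¬ E v u}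

lemma HSemicomplete.card_nonNeighbors_le (hE : HSemicomplete E h) (v : V) :
    #(nonNeighbors E v) ≤ h :=
  hE v

lemma symmGen_of_notMem_nonNeighbors {u v : V} (huv : u ≠ v) (h : u ∉ nonNeighbors E v) :
    SymmGen E u v := by
  simp only [nonNeighbors, mem_filter, mem_univ, true_and] at h
  grind [SymmGen]

lemma HSemicomplete.exists_mem_forall_symmGen (hE : HSemicomplete E h) {Q : Finset V}
    (hQ : #W * (h + 1) < #Q) : ∃ v ∈ Q, v ∉ W ∧ ∀ w ∈ W, SymmGen E v w := by
  have hblocked : #(W.biUnion fun w ↦ insert w (nonNeighbors E w)) ≤ #W * (h + 1) :=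
    card_biUnion_le_card_mul _ _ _ fun w _ ↦
      (card_insert_le _ _).trans (Nat.succ_le_succ (hE.card_nonNeighbors_le w))
  obtain ⟨v, hvQ, hv⟩ := exists_mem_notMem_of_card_lt_card (hblocked.trans_lt hQ)
  simp only [mem_biUnion, mem_insert, not_exists, not_and, not_or] at hv
  exact ⟨v, hvQ, fun hvW ↦ (hv v hvW).1 rfl,
    fun w hw ↦ symmGen_of_notMem_nonNeighbors (hv w hw).1 (hv w hw).2⟩

lemma HSemicomplete.exists_pairwise_symmGen_superset (hE : HSemicomplete E h)
    (hW : (W : Set V).Pairwise (SymmGen E)) {Q : Finset V} {q : ℕ}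
    (hQ : (#W + q) * (h + 1) ≤ #Q) :
    ∃ W' ⊇ W, #W' ≤ #W + q ∧ q ≤ #(Q ∩ W') ∧ (W' : Set V).Pairwise (SymmGen E) := by
  induction q with
  | zero => exact ⟨W, subset_rfl, by simp, by simp, hW⟩
  | succ q ih =>
    rw [← add_assoc, Nat.succ_mul] at hQ
    obtain ⟨W', hWW', hcard, hq, hW'⟩ := ih (by omega)
    obtain ⟨v, hvQ, hvW', hv⟩ := hE.exists_mem_forall_symmGen (W := W') (Q := Q) <| by
      have := Nat.mul_le_mul_right (h + 1) hcard
      omega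
    refine ⟨insert v W', hWW'.trans (subset_insert v W'), ?_, ?_, ?_⟩
    · rw [card_insert_of_notMem hvW']
      omega
    · rw [inter_insert_of_mem hvQ, card_insert_of_notMem (by simp [hvW'])]
      omega
    · rw [coe_insert, Set.pairwise_insert_of_symm]
      exact ⟨hW', fun w hw _ ↦ hv w hw⟩

lemma HSemicomplete.exists_pairwise_symmGen_superset_forall {ι : Type*} (hE : HSemicomplete E h)
    (hW : (W : Set V).Pairwise (SymmGen E)) (D : Finset ι) {Q : ι → Finset V} {q : ℕ}
    (hQ : ∀ d ∈ D, (#W + #D * q) * (h + 1) ≤ #(Q d)) :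
    ∃ W' ⊇ W, #W' ≤ #W + #D * q ∧ (∀ d ∈ D, q ≤ #(Q d ∩ W')) ∧
      (W' : Set V).Pairwise (SymmGen E) := by
  classical
  induction D using Finset.induction_on with
  | empty => exact ⟨W, subset_rfl, by simp, by simp, hW⟩
  | insert d D hd ih =>
    rw [card_insert_of_notMem hd, Nat.succ_mul, ← add_assoc] at hQ
    obtain ⟨W', hWW', hcard, hq, hW'⟩ := ih fun e he ↦
      (Nat.mul_le_mul_right _ (Nat.le_add_right _ q)).trans (hQ e (mem_insert_of_mem he))
    obtain ⟨W'', hWW'', hcard', hq', hW''⟩ := hE.exists_pairwise_symmGen_superset hW'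
      ((Nat.mul_le_mul_right _ (Nat.add_le_add_right hcard q)).trans (hQ d (mem_insert_self d D)))
    refine ⟨W'', hWW'.trans hWW'', ?_, ?_, hW''⟩
    · rw [card_insert_of_notMem hd, Nat.succ_mul]
      omega
    · rw [forall_mem_insert]
      exact ⟨hq', fun e he ↦ (hq e he).trans (card_le_card (inter_subset_inter_left hWW''))⟩

variable {ι : Type*} [Fintype ι] {x y : ι → V}

lemma IsLinkedFamily.exists_fin_pairwise_symmGen (hxy : IsLinkedFamily E P x y)
    (hE : HSemicomplete E h) {m : ℕ} (hm : m * (2 * h + 1) ≤ Fintype.card ι) :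
    ∃ x y : Fin m → V, IsLinkedFamily E P x y ∧
      (⋃ i, {x i, y i} : Set V).Pairwise (SymmGen E) := by
  classical
  let conflict (i j : ι) : Prop :=
    ∃ u ∈ ({x i, y i} : Set V), ∃ v ∈ ({x j, y j} : Set V), u ≠ v ∧ ¬ SymmGen E u v
  have : Std.Symm conflict :=
    ⟨fun i j ⟨u, hu, v, hv, huv, hE⟩ ↦ ⟨v, hv, u, hu, huv.symm, fun h ↦ hE h.symm⟩⟩
  have hdeg (i : ι) : #{j | conflict i j} ≤ 2 * h := by
    refine (card_le_card_of_pairwise_disjoint (B := nonNeighbors E (x i) ∪ nonNeighbors E (y i))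
      hxy.disjoint fun j hj ↦ ?_).trans ((card_union_le _ _).trans ?_)
    · obtain ⟨u, hu, v, hv, huv, hE⟩ := (mem_filter.1 hj).2
      have hvu : v ∈ nonNeighbors E u :=
        by_contra fun h ↦ hE (symmGen_of_notMem_nonNeighbors huv.symm h).symm
      refine ⟨v, mem_union.2 ?_, hv⟩
      obtain rfl | rfl := hu
      exacts [.inl hvu, .inr hvu]
    · have := hE.card_nonNeighbors_le (x i)
      have := hE.card_nonNeighbors_le (y i)
      omega
  obtain ⟨J, -, rfl, hJ⟩ := exists_subset_card_eq_pairwise_not (r := conflict) (s := univ)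
    (fun i _ ↦ hdeg i) hm
  have hf := Subtype.val_injective.comp J.equivFin.symm.injective
  refine ⟨_, _, hxy.comp_injective hf, fun u hu v hv huv ↦ ?_⟩
  obtain ⟨i, hui⟩ := Set.mem_iUnion.1 hu
  obtain ⟨j, hvj⟩ := Set.mem_iUnion.1 hv
  obtain rfl | hij := eq_or_ne i j
  · have := hxy.eq_or_edge (J.equivFin.symm i)
    simp only [Function.comp_apply, Set.mem_insert_iff, Set.mem_singleton_iff] at hui hvj
    grind [SymmGen]
  · by_contra hE
    exact hJ (by simp) (by simp) (hf.ne hij) ⟨u, hui, v, hvj, huv, hE⟩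

-- Add to the vertices of `k + 1` mutually adjacent pairs, for each ordered pair of indices, `k + 1`
-- of the midpoints linking them, always keeping the vertex set a clique.
lemma IsLinkedFamily.exists_semicomplete_le_pathwidth (hxy : IsLinkedFamily E P x y)
    (hE : HSemicomplete E h)
    (hP : (2 * (k + 1) + (k + 1) * (k + 1) * (k + 1)) * (h + 1) ≤ P)
    (hn : (k + 1) * (2 * h + 1) ≤ Fintype.card ι) :
    ∃ W : Finset V, Semicomplete (fun a b : {v // v ∈ W} ↦ E a b) ∧
      k ≤ pathwidth (fun a b : {v // v ∈ W} ↦ E a b) := by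
  obtain ⟨x, y, hxy, hclique⟩ := hxy.exists_fin_pairwise_symmGen hE hn
  let W := univ.image x ∪ univ.image y
  let D := (univ : Finset (Fin (k + 1))).offDiag
  have hW : (W : Set V).Pairwise (SymmGen E) := hclique.mono fun v hv ↦ by
    simp only [W, coe_union, coe_image, coe_univ, Set.image_univ] at hv
    simp only [Set.mem_iUnion, Set.mem_insert_iff, Set.mem_singleton_iff]
    grind
  have hWcard : #W ≤ 2 * (k + 1) := by
    have hx := card_image_le (s := univ) (f := x)
    have hy := card_image_le (s := univ) (f := y)
    have := card_union_le (univ.image x) (univ.image y)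
    simp only [card_fin, W] at *
    omega
  have hDcard : #D ≤ (k + 1) * (k + 1) := by simp [D, offDiag_card]
  obtain ⟨W', hWW', -, hlink, hW'⟩ := hE.exists_pairwise_symmGen_superset_forall hW D
    (Q := fun d ↦ midpoints E (y d.1) (x d.2)) (q := k + 1) fun d hd ↦ by
      have : (#W + #D * (k + 1)) * (h + 1) ≤ P := le_trans (by gcongr) hP
      exact this.trans (hxy.le_card_midpoints (mem_offDiag.1 hd).2.2)
  refine ⟨W', fun u v huv ↦ hW' u.2 v.2 (Subtype.coe_ne_coe.2 huv), ?_⟩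
  refine (hxy.induce (fun i ↦ hWW' ?_) (fun i ↦ hWW' ?_) fun i j hij ↦
    hlink (i, j) (by simpa [D] using hij)).le_pathwidth (by simp)
  · exact mem_union_left _ (mem_image_of_mem x (mem_univ i))
  · exact mem_union_right _ (mem_image_of_mem y (mem_univ i))

end Extraction

section Tangles

variable {E : V → V → Prop} [DecidableRel E] {d h n K P Q : ℕ} {T T₁ T₂ : Finset V}

lemma HSemicomplete.le_card_midpoints (hE : HSemicomplete E h) {u v : V}
    (huv : P + h + 1 ≤ #(NoutV E u \ NoutV E v)) : P ≤ #(midpoints E u v) := by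
  have hsub : NoutV E u \ NoutV E v ⊆ midpoints E u v ∪ insert v (nonNeighbors E v) := by
    intro w
    simp only [NoutV, midpoints, nonNeighbors, mem_sdiff, mem_union, mem_insert, mem_filter,
      mem_univ, true_and]
    grind
  have := (card_le_card hsub).trans (card_union_le _ _)
  have := card_insert_le v (nonNeighbors E v)
  have := hE.card_nonNeighbors_le v
  omega

lemma IsMatchTangle.exists_isLinkedFamily (hT : IsMatchTangle E d n (P + h) T₁ T₂)
    (hE : HSemicomplete E h) : ∃ x y : Fin n → V, IsLinkedFamily E P x y := by
  obtain ⟨hT₁, -, hlow, hhigh, φ, hφ, hedge⟩ := hT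
  have hne (u v : T₁) : φ u ≠ v := fun huv ↦ by
    have := hlow v v.2
    have := huv ▸ hhigh _ (hφ.mapsTo u.2)
    omega
  have hfam : IsLinkedFamily E P (Subtype.val : T₁ → V) (φ ∘ Subtype.val) := by
    refine ⟨fun u ↦ .inr (hedge u u.2), fun u v huv ↦ ?_, fun u v _ ↦ hE.le_card_midpoints ?_⟩
    · have := hφ.injOn.ne u.2 v.2 (Subtype.coe_ne_coe.2 huv)
      simp [Function.onFun, Set.disjoint_left, huv, (hne _ _).symm, hne, this]
    · have := hlow v v.2
      have := hhigh _ (hφ.mapsTo u.2)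
      have := le_card_sdiff (NoutV E v) (NoutV E (φ u))
      simp only [dOutV, Function.comp_apply] at *
      omega
  exact hfam.exists_fin (by simp [hT₁])

omit [DecidableEq V] in
lemma isLinkedFamily_val {F : Finset V}
    (hF : (F : Set V).Pairwise fun u v ↦ P ≤ #(midpoints E u v)) :
    IsLinkedFamily E P (Subtype.val : F → V) Subtype.val :=
  ⟨fun _ ↦ .inl rfl, fun u v huv ↦ by simpa [Function.onFun, Subtype.coe_inj] using huv,
    fun u v huv ↦ hF u.2 v.2 (Subtype.coe_ne_coe.2 huv)⟩

lemma HSemicomplete.card_le_of_forall_card_filter_le (hE : HSemicomplete E h)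
    (hT : ∀ u ∈ T, #{v ∈ T | E u v} ≤ Q) : #T ≤ 2 * Q + h + 1 := by
  obtain rfl | hne := T.eq_empty_or_nonempty
  · simp
  obtain ⟨v, hv, hin⟩ : ∃ v ∈ T, #{u ∈ T | E u v} ≤ Q := by
    by_contra! hlt
    have := card_mul_le_card_mul (m := Q + 1) (n := Q) (fun v u ↦ E u v) hlt hT
    exact absurd (Nat.le_of_mul_le_mul_left this hne.card_pos) (by omega)
  have hsub : T ⊆ {u ∈ T | E v u} ∪ {u ∈ T | E u v} ∪ insert v (nonNeighbors E v) := by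
    intro w
    simp only [nonNeighbors, mem_union, mem_insert, mem_filter, mem_univ, true_and]
    grind
  have := (card_le_card hsub).trans ((card_union_le _ _).trans
    (Nat.add_le_add_right (card_union_le _ _) _))
  have := card_insert_le v (nonNeighbors E v)
  have := hE.card_nonNeighbors_le v
  have := hT v hv
  omega

omit [DecidableEq V] in
lemma exists_isLinkedFamily_of_forall_card_filter_not_le
    (hT : ∀ u ∈ T, #{v ∈ T | ¬ E u v} ≤ Q) (hcard : 2 * n + 3 * Q + P ≤ #T) :
    ∃ x y : Fin n → V, IsLinkedFamily E P x y := by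
  classical
  have hF := card_le_two_mul_card_filter_card_le hT
  set F : Finset V := {v ∈ T | #{u ∈ T | ¬ E u v} ≤ 2 * Q}
  refine (isLinkedFamily_val (F := F) fun u hu v hv _ ↦ ?_).exists_fin
    (by rw [Fintype.card_coe]; omega)
  have hsub : T ⊆ midpoints E u v ∪ {w ∈ T | ¬ E u w} ∪ {w ∈ T | ¬ E w v} := by
    intro w
    simp only [midpoints, mem_union, mem_filter, mem_univ, true_and]
    grind
  have := (card_le_card hsub).trans ((card_union_le _ _).trans
    (Nat.add_le_add_right (card_union_le _ _) _))
  have := hT u (mem_filter.1 hu).1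
  have := (mem_filter.1 hv).2
  omega

lemma HSemicomplete.exists_isLinkedFamily_of_forall_card_sdiff_le (hE : HSemicomplete E h)
    {N : Finset V} (hT : ∀ v ∈ T, #(NoutV E v \ N) ≤ Q ∧ #(N \ NoutV E v) ≤ Q)
    (hcard : 2 * n + 5 * Q + P + h + 1 ≤ #T) : ∃ x y : Fin n → V, IsLinkedFamily E P x y := by
  have hout : #(T \ N) ≤ 2 * Q + h + 1 := by
    refine hE.card_le_of_forall_card_filter_le fun u hu ↦
      (card_le_card fun v ↦ ?_).trans (hT u (mem_sdiff.1 hu).1).1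
    simp only [NoutV, mem_filter, mem_sdiff, mem_univ, true_and]
    grind
  have hsplit := card_sdiff_add_card_inter T N
  refine exists_isLinkedFamily_of_forall_card_filter_not_le (T := T ∩ N) (Q := Q) (fun u hu ↦
    (card_le_card fun v ↦ ?_).trans (hT u (mem_inter.1 hu).1).2) (by omega)
  simp only [NoutV, mem_filter, mem_sdiff, mem_inter, mem_univ, true_and]
  grind

-- Either many vertices of the tangle have pairwise very different out-neighborhoods, or many of
-- them have out-neighborhoods close to one and the same set.
lemma IsDegTangle.exists_isLinkedFamily {l : ℕ} (hT : IsDegTangle E d l K T)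
    (hE : HSemicomplete E h) (hl : n * (2 * n + 5 * (P + h + K) + P + h + 1) ≤ l) :
    ∃ x y : Fin n → V, IsLinkedFamily E P x y := by
  obtain ⟨rfl, hdeg⟩ := hT
  let close (u v : V) : Prop :=
    #(NoutV E u \ NoutV E v) ≤ P + h ∨ #(NoutV E v \ NoutV E u) ≤ P + h
  have : Std.Symm close := ⟨fun u v ↦ Or.symm⟩
  by_cases hfew : ∀ u ∈ T, #{v ∈ T | close u v} ≤ 2 * n + 5 * (P + h + K) + P + h
  · obtain ⟨F, -, rfl, hF⟩ := exists_subset_card_eq_pairwise_not hfew hl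
    refine (isLinkedFamily_val (F := F) fun u hu v hv huv ↦ ?_).exists_fin (by simp)
    exact hE.le_card_midpoints (not_le.1 (not_or.1 (hF hu hv huv)).1)
  · push Not at hfew
    obtain ⟨u, hu, hmany⟩ := hfew
    refine hE.exists_isLinkedFamily_of_forall_card_sdiff_le (N := NoutV E u) (fun v hv ↦ ?_) hmany
    obtain ⟨hv, hclose⟩ := mem_filter.1 hv
    have hu_deg := hdeg u hu
    have hv_deg := hdeg v hv
    have := card_sdiff_add_card_inter (NoutV E u) (NoutV E v)
    have := card_sdiff_add_card_inter (NoutV E v) (NoutV E u)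
    rw [inter_comm] at this
    simp only [close, dOutV] at hclose hu_deg hv_deg
    omega

end Tangles

section UpperBound

variable {E : V → V → Prop} [DecidableRel E] {K l m t : ℕ} {S T : Finset V} {v : V}

/-- The vertices of out-degree less than `t`. -/
def lowVertices (E : V → V → Prop) [DecidableRel E] (t : ℕ) : Finset V := {v | dOutV E v < t}

/-- The vertices of out-degree at least `t`. -/
def highVertices (E : V → V → Prop) [DecidableRel E] (t : ℕ) : Finset V := {v | t ≤ dOutV E v}

section

omit [DecidableEq V]

lemma mem_lowVertices : v ∈ lowVertices E t ↔ dOutV E v < t := by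
  simp [lowVertices]

lemma mem_highVertices : v ∈ highVertices E t ↔ t ≤ dOutV E v := by
  simp [highVertices]

lemma lowVertices_mono : Monotone (lowVertices E) := fun _ _ hst _ ↦ by
  simpa only [mem_lowVertices] using fun h ↦ h.trans_le hst

lemma highVertices_anti : Antitone (highVertices E) := fun _ _ hst _ ↦ by
  simpa only [mem_highVertices] using hst.trans

lemma lowVertices_eq_univ (ht : Fintype.card V < t) : lowVertices E t = univ :=
  eq_univ_of_forall fun _ ↦ mem_lowVertices.2 ((card_le_univ _).trans_lt ht)

lemma highVertices_eq_empty (ht : Fintype.card V < t) : highVertices E t = ∅ :=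
  eq_empty_of_forall_notMem fun _ hv ↦
    (mem_highVertices.1 hv).not_gt ((card_le_univ _).trans_lt ht)

end

lemma exists_isMatchTangle_of_forall_le_coverSize
    (h : ∀ S ⊆ lowVertices E t,
      m ≤ coverSize (NoutV E) (lowVertices E t) (highVertices E (t + K)) S) :
    ∃ d T₁ T₂, IsMatchTangle E d m K T₁ T₂ := by
  obtain hV | hV := isEmpty_or_nonempty V
  · obtain rfl : m = 0 := by
      simpa [coverSize, eq_empty_of_isEmpty] using h ∅ (empty_subset _)
    exact ⟨0, ∅, ∅, by simp [IsMatchTangle]⟩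
  obtain ⟨A, hA, hmA, φ, hφ, hφA⟩ := exists_matching_of_forall_le_coverSize h
  obtain ⟨T₁, hT₁A, rfl⟩ := exists_subset_card_eq hmA
  have hφT₁ : Set.InjOn φ T₁ := hφ.mono (by exact_mod_cast hT₁A)
  have hlow {u : V} (hu : u ∈ T₁) := mem_lowVertices.1 (hA (hT₁A hu))
  have hφ_mem {u : V} (hu : u ∈ T₁) := mem_inter.1 (hφA u (hT₁A hu))
  refine ⟨t - 1, T₁, T₁.image φ, rfl, card_image_of_injOn hφT₁, fun u hu ↦ ?_,
    forall_mem_image.2 fun u hu ↦ ?_, φ, ?_, fun u hu ↦ ?_⟩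
  · exact Nat.le_sub_one_of_lt (hlow hu)
  · have := hlow hu
    have := mem_highVertices.1 (hφ_mem hu).2
    omega
  · rw [coe_image]
    exact hφT₁.bijOn_image
  · simpa [NoutV] using (hφ_mem hu).1

lemma exists_isDegTangle_of_le_card (hl : l ≤ #(lowVertices E (t + K + 1) ∩ highVertices E t)) :
    ∃ T, IsDegTangle E t l K T := by
  obtain ⟨T, hT, rfl⟩ := exists_subset_card_eq hl
  refine ⟨T, rfl, fun v hv ↦ ?_⟩
  have := hT hv
  rw [mem_inter, mem_lowVertices, mem_highVertices] at this
  omega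

lemma card_closedOut_sdiff_le (hT : T ⊆ lowVertices E (t + 1)) :
    #(closedOut E T \ S) ≤
      coverSize (NoutV E) (lowVertices E t) (highVertices E (t + K)) S +
        coverSize (NoutV E) (lowVertices E (t + 1)) (highVertices E (t + 1 + K)) T +
        #(lowVertices E (t + K + 1) ∩ highVertices E t) := by
  have hsub : closedOut E T \ S ⊆ lowVertices E t \ S ∪
      T.biUnion (NoutV E) ∩ highVertices E (t + 1 + K) ∪
      lowVertices E (t + K + 1) ∩ highVertices E t := by
    intro v hv
    have hlow (hvT : v ∈ T) := mem_lowVertices.1 (hT hvT)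
    simp only [mem_sdiff, mem_closedOut] at hv
    simp only [mem_union, mem_inter, mem_sdiff, mem_biUnion, mem_lowVertices, mem_highVertices,
      NoutV, mem_filter, mem_univ, true_and]
    grind
  have := (card_le_card hsub).trans ((card_union_le _ _).trans
    (Nat.add_le_add_right (card_union_le _ _) _))
  simp only [coverSize]
  omega

-- By submodularity the maximal minimum covers `S t` increase with `t`, so they define a path
-- decomposition; its bags consist of parts of two minimum covers and of vertices of out-degree
-- between `t` and `t + K`.
omit [DecidableEq V] in
lemma exists_isDegTangle_or_isMatchTangle_of_lt_pathwidth (hpw : l + 2 * m < pathwidth E) (K : ℕ) :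
    (∃ d T, IsDegTangle E d l K T) ∨ ∃ d T₁ T₂, IsMatchTangle E d m K T₁ T₂ := by
  classical
  by_contra! hno
  obtain ⟨hdeg, hmatch⟩ := hno
  choose S hS using fun t ↦
    exists_maximal_isMinCover (NoutV E) (lowVertices E t) (highVertices E (t + K))
  have hmono : Monotone S := fun s t hst ↦
    (hS s).prop.subset_of_maximal (hS t) (lowVertices_mono hst)
      (highVertices_anti (Nat.add_le_add_right hst K))
  have hzero : S 0 = ∅ := subset_empty.1 <| (hS 0).prop.1.trans <| by simp [lowVertices]
  have hlast : S (Fintype.card V + 1) = univ := by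
    have hlow : lowVertices E (Fintype.card V + 1) = univ := lowVertices_eq_univ (by omega)
    have hhigh : highVertices E (Fintype.card V + 1 + K) = ∅ := highVertices_eq_empty (by omega)
    refine univ_subset_iff.1 ((hS _).le_of_ge ⟨hlow.symm.subset, fun T _ ↦ ?_⟩ (subset_univ _))
    simp [coverSize, hlow, hhigh]
  have hcover (t : ℕ) :
      coverSize (NoutV E) (lowVertices E t) (highVertices E (t + K)) (S t) ≤ m := by
    by_contra! hlt
    obtain ⟨d, T₁, T₂, hT⟩ := exists_isMatchTangle_of_forall_le_coverSize (E := E) (K := K)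
      fun T hT ↦ hlt.le.trans ((hS t).prop.2 T hT)
    exact hmatch d T₁ T₂ hT
  have hmiddle (t : ℕ) : #(lowVertices E (t + K + 1) ∩ highVertices E t) ≤ l := by
    by_contra! hlt
    obtain ⟨T, hT⟩ := exists_isDegTangle_of_le_card hlt.le
    exact hdeg t T hT
  refine hpw.not_ge (pathwidth_le_of_forall_card_le
    (isPathDecomp_of_monotone hmono hzero hlast) fun t ↦ ?_)
  have := card_closedOut_sdiff_le (K := K) (S := S t) (hS (t + 1)).prop.1
  have := hcover t
  have := hcover (t + 1)
  have := hmiddle t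
  omega

end UpperBound

lemma HSemicomplete.exists_isLinkedFamily_of_lt_pathwidth {E : V → V → Prop} [DecidableRel E]
    {h n P : ℕ} (hE : HSemicomplete E h)
    (hpw : n * (2 * n + 11 * (P + h) + 1) + 2 * n < pathwidth E) :
    ∃ x y : Fin n → V, IsLinkedFamily E P x y := by
  obtain ⟨d, T, hT⟩ | ⟨d, T₁, T₂, hT⟩ :=
    exists_isDegTangle_or_isMatchTangle_of_lt_pathwidth hpw (P + h)
  · exact hT.exists_isLinkedFamily hE (le_of_eq (by ring))
  · exact hT.exists_isLinkedFamily hE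

/-- For all positive `h`, `k` there is `f(h,k)` such that every `h`-semicomplete digraph
of pathwidth at least `f(h,k)` has an induced semicomplete subgraph of pathwidth at
least `k`. -/
theorem exists_semicomplete_subgraph_of_large_pathwidth (h k : ℕ) (hh : 0 < h) (hk : 0 < k) :
    ∃ f : ℕ, 0 < f ∧
      ∀ (V : Type) [Fintype V] [DecidableEq V] (E : V → V → Prop) [DecidableRel E],
        Irreflexive E → HSemicomplete E h → f ≤ pathwidth E →
        ∃ W : Finset V, Semicomplete (fun a b : {x // x ∈ W} => E a.1 b.1) ∧
          k ≤ pathwidth (fun a b : {x // x ∈ W} => E a.1 b.1) := by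
  let n := (k + 1) * (2 * h + 1)
  let P := (2 * (k + 1) + (k + 1) * (k + 1) * (k + 1)) * (h + 1)
  refine ⟨n * (2 * n + 11 * (P + h) + 1) + 2 * n + 1, Nat.succ_pos _, fun V _ _ E _ _ hE hpw ↦ ?_⟩
  obtain ⟨x, y, hxy⟩ : ∃ x y : Fin n → V, IsLinkedFamily E P x y :=
    hE.exists_isLinkedFamily_of_lt_pathwidth hpw
  exact hxy.exists_semicomplete_le_pathwidth hE le_rfl (by simp [n])

end AlmostSemicomplete
end

section
/- Let G be an undirected graph on n vertices with maximum degree at most d, and let p = 1/(2d+1). Then there exists a probability distribution on independent sets I of G such that Pr(v ∈ I) = p for every v ∈ V(G), and for every S ⊆ V(G) and every t > 0, Pr(|S ∩ I| > p|S| + t) < exp(−t²/(9|S|)) and Pr(|S ∩ I| < p|S| − t) < exp(−t²/(9|S|)). -/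
/-!
Decide the vertices one at a time. When `k` is reached and the current random independent set `I`
avoids its neighbourhood, add `k` with the constant probability that makes `ℙ(k ∈ I) = p k`. By the
union bound `I` avoids the neighbourhood with probability at least `1 - d / (2 * d + 1)`, so this
constant is at most `1 / (d + 1)`.

Let `f` change by at most `l v` when `v` is added to its argument. Then `v` acts on the conditional
expectations of `f` both directly and by excluding its neighbours from later steps. Its total
influence `c v` is given by a recursion whose solution satisfies `|c|² = ⟨l, c⟩ + ⟨c, M c⟩ / 2`,
where `M = A / (d + 1)` and `A` is the adjacency matrix. As `A ≤ d`, this gives `|c| ≤ 2 * |l|`;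
Hoeffding's lemma at each step and Chernoff's bound then yield the tail `exp (-t² / (2 * |l|²))`.
For `f I = |S ∩ I|`, `l` is the indicator of `S`.
-/

open Finset Matrix
open Real (exp)

section Weights

variable {α : Type*} [Fintype α] {w X : α → ℝ}

lemma dotProduct_boole (w : α → ℝ) (q : α → Prop) [DecidablePred q] :
    (w ⬝ᵥ fun a ↦ if q a then 1 else 0) = ∑ a with q a, w a := by
  simp [dotProduct, sum_filter]

lemma vecMul_mem_stdSimplex [DecidableEq α] {M : Matrix α α ℝ} (hw : w ∈ stdSimplex ℝ α)
    (hM : M ∈ rowStochastic ℝ α) : w ᵥ* M ∈ stdSimplex ℝ α :=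
  ⟨nonneg_vecMul_of_mem_rowStochastic hM hw.1, by
    simpa [dotProduct_one] using
      vecMul_dotProduct_one_eq_one_rowStochastic hM (dotProduct_one w ▸ hw.2)⟩

lemma dotProduct_lt_dotProduct_of_mem_stdSimplex {f g : α → ℝ} (hw : w ∈ stdSimplex ℝ α)
    (hfg : ∀ a, f a < g a) : w ⬝ᵥ f < w ⬝ᵥ g := by
  obtain ⟨a, ha, hwa⟩ : ∃ a ∈ univ, 0 < w a := by
    by_contra! h
    linarith [sum_nonpos h, hw.2]
  exact sum_lt_sum (fun b _ ↦ mul_le_mul_of_nonneg_left (hfg b).le (hw.1 b))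
    ⟨a, ha, mul_lt_mul_of_pos_left (hfg a) hwa⟩

lemma sum_filter_lt_exp_mul_dotProduct (hw : w ∈ stdSimplex ℝ α) {a : ℝ} (ha : 0 < a) (t : ℝ) :
    ∑ x with t < X x, w x < exp (-(a * t)) * (w ⬝ᵥ fun x ↦ exp (a * X x)) := by
  calc ∑ x with t < X x, w x = w ⬝ᵥ fun x ↦ if t < X x then 1 else 0 :=
        (dotProduct_boole w _).symm
    _ < w ⬝ᵥ exp (-(a * t)) • fun x ↦ exp (a * X x) := by
        refine dotProduct_lt_dotProduct_of_mem_stdSimplex hw fun x ↦ ?_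
        rw [Pi.smul_apply, smul_eq_mul, ← Real.exp_add]
        split_ifs with hx
        · exact Real.one_lt_exp_iff.2 (by nlinarith)
        · exact Real.exp_pos _
    _ = _ := dotProduct_smul _ _ _

lemma sum_filter_lt_exp_of_mgf_le {m s t : ℝ} (hw : w ∈ stdSimplex ℝ α) (hs : 0 ≤ s) (ht : 0 < t)
    (hX : ∀ a > 0, (w ⬝ᵥ fun x ↦ exp (a * X x)) ≤ exp (a * m + a ^ 2 * s / 2)) :
    ∑ x with m + t < X x, w x < exp (-t ^ 2 / (2 * s)) := by
  have chernoff {a : ℝ} (ha : 0 < a) :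
      ∑ x with m + t < X x, w x < exp (-(a * t) + a ^ 2 * s / 2) := by
    calc _ < exp (-(a * (m + t))) * (w ⬝ᵥ fun x ↦ exp (a * X x)) :=
          sum_filter_lt_exp_mul_dotProduct hw ha _
      _ ≤ exp (-(a * (m + t))) * exp (a * m + a ^ 2 * s / 2) := by
          gcongr
          exact hX a ha
      _ = exp (-(a * t) + a ^ 2 * s / 2) := by
          rw [← Real.exp_add]
          ring_nf
  rcases hs.eq_or_lt with rfl | hs
  · exact (chernoff one_pos).trans_le (by simp [ht.le])
  · convert chernoff (div_pos ht hs) using 2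
    field_simp
    norm_num

end Weights

lemma hoeffding_two_point (x y : ℝ) {q : ℝ} (hq : q ∈ Set.Icc (0 : ℝ) 1) :
    q * exp x + (1 - q) * exp y ≤ exp ((x - y) ^ 2 / 8) * exp (q * x + (1 - q) * y) := by
  let μ := ProbabilityTheory.bernoulliMeasure true false ⟨q, hq⟩
  let X (i : Bool) : ℝ := if i then x else y
  have hE (f : Bool → ℝ) : ∫ i, f i ∂μ = q * f true + (1 - q) * f false :=
    ProbabilityTheory.integral_bernoulliMeasure true false _ f
  have hX : ∀ᵐ i ∂μ, X i ∈ Set.Icc (min x y) (max x y) := .of_forall fun i ↦ by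
    cases i <;> simp [X]
  have h := (ProbabilityTheory.hasSubgaussianMGF_of_mem_Icc
    (Measurable.of_discrete.aemeasurable) hX).mgf_le 1
  simp only [ProbabilityTheory.mgf, hE, X, max_sub_min_eq_abs, if_true, Bool.false_eq_true,
    if_false, one_mul, Real.exp_sub] at h
  push_cast at h
  rw [← div_le_iff₀ (Real.exp_pos _), add_div, mul_div_assoc, mul_div_assoc]
  refine h.trans_eq ?_
  rw [Real.norm_eq_abs, abs_abs, div_pow, sq_abs]
  congr 1
  ring

section Marginals

variable {V : Type*} [Fintype V] [DecidableEq V]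

lemma dotProduct_card_inter (w : Finset V → ℝ) (S : Finset V) :
    (w ⬝ᵥ fun I ↦ (#(S ∩ I) : ℝ)) = ∑ v ∈ S, ∑ I with v ∈ I, w I := by
  simp_rw [← dotProduct_boole, dotProduct]
  rw [sum_comm]
  simp [mul_comm]

lemma one_sub_sum_le_sum_disjoint {w : Finset V → ℝ} (hw : w ∈ stdSimplex ℝ (Finset V))
    (S : Finset V) :
    1 - ∑ v ∈ S, ∑ I with v ∈ I, w I ≤ ∑ I with Disjoint S I, w I := by
  rw [sub_le_iff_le_add, ← dotProduct_card_inter, ← dotProduct_boole, ← dotProduct_add]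
  calc 1 = w ⬝ᵥ 1 := ((dotProduct_one w).trans hw.2).symm
    _ ≤ _ := dotProduct_le_dotProduct_of_nonneg_left (fun I ↦ ?_) hw.1
  by_cases hI : Disjoint S I
  · simp [hI]
  · have : 1 ≤ #(S ∩ I) := card_pos.2 (not_disjoint_iff_nonempty_inter.1 hI)
    simpa [hI] using this

end Marginals

section BoundedDifferences

variable {V : Type*} [DecidableEq V] {A : Finset V} {f : Finset V → ℝ} {l : V → ℝ}

/-- `f` changes by at most `l v` when a vertex `v ∈ A` is added to its argument: the hypothesis of
the bounded differences inequality. -/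
def HasBoundedDifferences (A : Finset V) (f : Finset V → ℝ) (l : V → ℝ) : Prop :=
  ∀ v ∈ A, ∀ I, |f (insert v I) - f I| ≤ l v

lemma HasBoundedDifferences.const_smul (hf : HasBoundedDifferences A f l) (a : ℝ) :
    HasBoundedDifferences A (a • f) (|a| • l) := fun v hv I ↦ by
  rw [Pi.smul_apply, Pi.smul_apply, ← smul_sub, smul_eq_mul, abs_mul]
  exact mul_le_mul_of_nonneg_left (hf v hv I) (abs_nonneg a)

lemma HasBoundedDifferences.neg (hf : HasBoundedDifferences A f l) :
    HasBoundedDifferences A (-f) l := fun v hv I ↦ by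
  simpa [neg_add_eq_sub, abs_sub_comm] using hf v hv I

lemma hasBoundedDifferences_card_inter (A S : Finset V) :
    HasBoundedDifferences A (fun I ↦ (#(S ∩ I) : ℝ)) (fun v ↦ if v ∈ S then 1 else 0) := by
  intro v _ I
  by_cases hS : v ∈ S
  · by_cases hI : v ∈ I
    · simp [hS, hI]
    · simp [inter_insert_of_mem, hS, hI]
  · simp [inter_insert_of_notMem, hS]

end BoundedDifferences

section InsertKernel

variable {V : Type*} [DecidableEq V]

/-- The Markov kernel on sets of vertices that turns `I` into `insert k I` with probability `P I`
and leaves it unchanged otherwise. A law `w` of the random set `I` is sent to `w ᵥ* K`, and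
`K *ᵥ f` averages the observable `f` over the random choice. -/
noncomputable def insertKernel (P : Finset V → ℝ) (k : V) : Matrix (Finset V) (Finset V) ℝ :=
  .of fun I ↦ P I • Pi.single (insert k I) 1 + (1 - P I) • Pi.single I 1

variable [Fintype V] {w P f : Finset V → ℝ} {k : V}

lemma insertKernel_mulVec_apply (P f : Finset V → ℝ) (k : V) (I : Finset V) :
    (insertKernel P k *ᵥ f) I = P I * f (insert k I) + (1 - P I) * f I := by
  simp only [mulVec, insertKernel, of_apply, add_dotProduct, smul_dotProduct,
    single_one_dotProduct, smul_eq_mul]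

lemma insertKernel_mem_rowStochastic (hP : ∀ I, P I ∈ Set.Icc (0 : ℝ) 1) :
    insertKernel P k ∈ rowStochastic ℝ (Finset V) := by
  refine ⟨fun I J ↦ ?_, ?_⟩
  · simp only [insertKernel, of_apply, Pi.add_apply, Pi.smul_apply, Pi.single_apply, smul_eq_mul]
    have := (hP I).1
    have := sub_nonneg.2 (hP I).2
    positivity
  · ext I
    simp [insertKernel_mulVec_apply]

lemma exists_of_vecMul_insertKernel_ne_zero {J : Finset V}
    (hJ : (w ᵥ* insertKernel P k) J ≠ 0) :
    ∃ I, w I ≠ 0 ∧ (J = I ∨ J = insert k I ∧ P I ≠ 0) := by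
  obtain ⟨I, -, hI⟩ := exists_ne_zero_of_sum_ne_zero hJ
  refine ⟨I, left_ne_zero_of_mul hI, ?_⟩
  by_contra! h
  rcases eq_or_ne J (insert k I) with hJk | hJk
  · simp [insertKernel, h.1, h.2 hJk] at hI
  · simp [insertKernel, h.1, hJk] at hI

lemma sum_filter_mem_vecMul_insertKernel_of_ne {v : V} (hv : v ≠ k) (w P : Finset V → ℝ) :
    ∑ I with v ∈ I, (w ᵥ* insertKernel P k) I = ∑ I with v ∈ I, w I := by
  rw [← dotProduct_boole, ← dotProduct_boole, ← dotProduct_mulVec]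
  congr 1
  ext I
  simp only [insertKernel_mulVec_apply, mem_insert, hv, false_or]
  ring

lemma sum_filter_mem_vecMul_insertKernel_self (hw : ∀ I, k ∈ I → w I = 0) (P : Finset V → ℝ) :
    ∑ I with k ∈ I, (w ᵥ* insertKernel P k) I = w ⬝ᵥ P := by
  rw [← dotProduct_boole, ← dotProduct_mulVec]
  refine sum_congr rfl fun I _ ↦ ?_
  by_cases hk : k ∈ I
  · simp [hw I hk]
  · simp [insertKernel_mulVec_apply, hk]

lemma HasBoundedDifferences.insertKernel_mulVec {A : Finset V} {l r : V → ℝ}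
    (hf : HasBoundedDifferences (insert k A) f l) (hP : HasBoundedDifferences A P r)
    (hP01 : ∀ I, P I ∈ Set.Icc (0 : ℝ) 1) :
    HasBoundedDifferences A (insertKernel P k *ᵥ f) (l + l k • r) := by
  intro v hv I
  have hk := hf k (mem_insert_self k A) I
  have hv₁ := hf v (mem_insert_of_mem hv) (insert k I)
  have hv₂ := hf v (mem_insert_of_mem hv) I
  obtain ⟨hP₀, hP₁⟩ := hP01 (insert v I)
  calc |(insertKernel P k *ᵥ f) (insert v I) - (insertKernel P k *ᵥ f) I|
      = |P (insert v I) * (f (insert v (insert k I)) - f (insert k I)) +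
          (1 - P (insert v I)) * (f (insert v I) - f I) +
          (f (insert k I) - f I) * (P (insert v I) - P I)| := by
        rw [insertKernel_mulVec_apply, insertKernel_mulVec_apply, insert_comm k v I]
        ring_nf
    _ ≤ P (insert v I) * |f (insert v (insert k I)) - f (insert k I)| +
          (1 - P (insert v I)) * |f (insert v I) - f I| +
          |f (insert k I) - f I| * |P (insert v I) - P I| := by
        refine (abs_add_three _ _ _).trans_eq ?_
        rw [abs_mul, abs_mul, abs_mul, abs_of_nonneg hP₀, abs_of_nonneg (sub_nonneg.2 hP₁)]
    _ ≤ P (insert v I) * l v + (1 - P (insert v I)) * l v + l k * r v := by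
        have := sub_nonneg.2 hP₁
        have := (abs_nonneg _).trans hk
        gcongr
        exact hP v hv I
    _ = (l + l k • r) v := by
        simp only [Pi.add_apply, Pi.smul_apply, smul_eq_mul]
        ring

lemma vecMul_insertKernel_dotProduct_exp_le (hw : 0 ≤ w) (hP : ∀ I, P I ∈ Set.Icc (0 : ℝ) 1)
    {δ : ℝ} (hf : ∀ I, |f (insert k I) - f I| ≤ δ) :
    (w ᵥ* insertKernel P k ⬝ᵥ fun I ↦ exp (f I)) ≤
      exp (δ ^ 2 / 8) * (w ⬝ᵥ fun I ↦ exp ((insertKernel P k *ᵥ f) I)) := by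
  rw [← dotProduct_mulVec, ← smul_eq_mul, ← dotProduct_smul]
  refine dotProduct_le_dotProduct_of_nonneg_left (fun I ↦ ?_) hw
  rw [Pi.smul_apply, smul_eq_mul, insertKernel_mulVec_apply, insertKernel_mulVec_apply]
  refine (hoeffding_two_point _ _ (hP I)).trans ?_
  gcongr ?_ * _
  gcongr exp (?_ / 8)
  exact sq_le_sq' (abs_le.1 (hf I)).1 (abs_le.1 (hf I)).2

end InsertKernel

section Influence

variable {V : Type*} [DecidableEq V] {M : Matrix V V ℝ}

/-- If `f` has bounded differences `l` and the vertices `ks`, listed from last to first, are decided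
one at a time, the decision on `v` moves the conditional expectation of `f` by at most
`influence M ks l v`, where `M k v` bounds the effect of `v` on the later decision on `k`. -/
noncomputable def influence (M : Matrix V V ℝ) : List V → (V → ℝ) → V → ℝ
  | [], _ => 0
  | k :: ks, l => Pi.single k (l k) + influence M ks (l + l k • M.row k)

lemma influence_apply_of_notMem {ks : List V} {v : V} (hv : v ∉ ks) (l : V → ℝ) :
    influence M ks l v = 0 := by
  induction ks generalizing l with
  | nil => rfl
  | cons k ks ih =>
    rw [List.mem_cons, not_or] at hv
    simp [influence, hv.1, ih hv.2]

variable [Fintype V]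

lemma influence_cons_dotProduct_self {k : V} {ks : List V} (hk : k ∉ ks) (l : V → ℝ) :
    influence M (k :: ks) l ⬝ᵥ influence M (k :: ks) l =
      l k ^ 2 + influence M ks (l + l k • M.row k) ⬝ᵥ influence M ks (l + l k • M.row k) := by
  simp [influence, influence_apply_of_notMem hk, sq]

lemma influence_dotProduct_self_eq (hM : M.IsSymm) (hdiag : ∀ v, M v v = 0) {ks : List V}
    (hks : ks.Nodup) (l : V → ℝ) :
    influence M ks l ⬝ᵥ influence M ks l =
      l ⬝ᵥ influence M ks l + influence M ks l ⬝ᵥ M *ᵥ influence M ks l / 2 := by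
  induction ks generalizing l with
  | nil => simp [influence]
  | cons k ks ih =>
    obtain ⟨hk, hks⟩ := List.nodup_cons.1 hks
    rw [influence_cons_dotProduct_self hk, ih hks, influence]
    set c := influence M ks (l + l k • M.row k)
    have hMk (x : ℝ) : c ⬝ᵥ M *ᵥ Pi.single k x = x * (M.row k ⬝ᵥ c) := by
      rw [← dotProduct_transpose_mulVec, hM.eq, single_dotProduct]
      rfl
    have hkM (x : ℝ) : Pi.single k x ⬝ᵥ M *ᵥ c = x * (M.row k ⬝ᵥ c) := single_dotProduct ..
    have hkk (x : ℝ) : Pi.single k x ⬝ᵥ M *ᵥ Pi.single k x = 0 := by simp [hdiag]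
    simp only [mulVec_add, dotProduct_add, add_dotProduct, hkk, hMk, hkM, smul_dotProduct,
      smul_eq_mul, dotProduct_single]
    ring

lemma influence_dotProduct_self_le (hM : M.IsSymm) (hdiag : ∀ v, M v v = 0)
    (hle : ∀ x, x ⬝ᵥ M *ᵥ x ≤ x ⬝ᵥ x) {ks : List V} (hks : ks.Nodup) (l : V → ℝ) :
    influence M ks l ⬝ᵥ influence M ks l ≤ 4 * (l ⬝ᵥ l) := by
  set c := influence M ks l
  have henergy : c ⬝ᵥ c = l ⬝ᵥ c + c ⬝ᵥ M *ᵥ c / 2 := influence_dotProduct_self_eq hM hdiag hks l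
  have hsq : 0 ≤ ((2 : ℝ) • l - c) ⬝ᵥ ((2 : ℝ) • l - c) := sum_nonneg fun v _ ↦ mul_self_nonneg _
  simp only [sub_dotProduct, dotProduct_sub, smul_dotProduct, dotProduct_smul, smul_eq_mul,
    dotProduct_comm c l] at hsq
  linarith [hle c]

end Influence

section Greedy

variable {V : Type*} [Fintype V] (G : SimpleGraph V)

lemma dotProduct_adjMatrix_mulVec_le [DecidableRel G.Adj] {d : ℕ} (hd : ∀ v, G.degree v ≤ d)
    (x : V → ℝ) : x ⬝ᵥ G.adjMatrix ℝ *ᵥ x ≤ d * (x ⬝ᵥ x) := by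
  classical
  have hlap : 0 ≤ x ⬝ᵥ G.lapMatrix ℝ *ᵥ x := (G.posSemidef_lapMatrix ℝ).dotProduct_mulVec_nonneg x
  rw [SimpleGraph.lapMatrix, sub_mulVec, dotProduct_sub, sub_nonneg,
    G.dotProduct_mulVec_degMatrix] at hlap
  refine hlap.trans ?_
  simp_rw [dotProduct, mul_sum, mul_assoc]
  exact sum_le_sum fun v _ ↦
    mul_le_mul_of_nonneg_right (mod_cast hd v) (mul_self_nonneg _)

variable [DecidableEq V]

/-- `w` is the law of a random subset of `A` that is independent in `G` and contains each `v ∈ A`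
with probability `p v`. -/
structure IsIndepLaw (p : V → ℝ) (A : Finset V) (w : Finset V → ℝ) : Prop where
  mem_stdSimplex : w ∈ stdSimplex ℝ (Finset V)
  subset : ∀ I, w I ≠ 0 → I ⊆ A
  isIndepSet : ∀ I : Finset V, w I ≠ 0 → G.IsIndepSet I
  marginal : ∀ v ∈ A, ∑ I with v ∈ I, w I = p v

lemma isIndepLaw_single_empty (p : V → ℝ) : IsIndepLaw G p ∅ (Pi.single ∅ 1) where
  mem_stdSimplex := single_mem_stdSimplex ℝ ∅
  subset I hI := by
    rw [Pi.single_apply, ite_ne_right_iff] at hI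
    exact hI.1.subset
  isIndepSet I hI := by
    rw [Pi.single_apply, ite_ne_right_iff] at hI
    simp [hI.1]
  marginal v hv := absurd hv (notMem_empty v)

variable {G} {p : V → ℝ} {A : Finset V} {w : Finset V → ℝ}

lemma IsIndepLaw.sum_filter_mem_eq_zero (hw : IsIndepLaw G p A w) {v : V} (hv : v ∉ A) :
    ∑ I with v ∈ I, w I = 0 :=
  sum_eq_zero fun I hI ↦ by
    by_contra hwI
    exact hv (hw.subset I hwI (mem_filter.1 hI).2)

lemma IsIndepLaw.one_sub_le_sum_disjoint (hw : IsIndepLaw G p A w) {b : ℝ} (hb : 0 ≤ b)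
    (hp : ∀ v, p v ≤ b) (S : Finset V) : 1 - #S * b ≤ ∑ I with Disjoint S I, w I := by
  have hmarg (v : V) : ∑ I with v ∈ I, w I ≤ b := by
    by_cases hv : v ∈ A
    · exact (hw.marginal v hv).trans_le (hp v)
    · exact (hw.sum_filter_mem_eq_zero hv).trans_le hb
  have hsum := sum_le_card_nsmul S _ b fun v _ ↦ hmarg v
  rw [nsmul_eq_mul] at hsum
  linarith [one_sub_sum_le_sum_disjoint hw.mem_stdSimplex S]

variable [DecidableRel G.Adj]

variable (G) in
/-- The probability with which the greedy process adds `k` to the current set `I`, of law `w`: zero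
if `I` meets the neighbourhood of `k`, and otherwise the constant that makes `p k` the overall
probability of adding `k`. -/
noncomputable def acceptProb (p : V → ℝ) (w : Finset V → ℝ) (k : V) (I : Finset V) : ℝ :=
  if Disjoint (G.neighborFinset k) I then
    p k / ∑ J with Disjoint (G.neighborFinset k) J, w J
  else 0

variable (G) in
/-- The law of the random independent set built greedily from `∅` by deciding the vertices of the
list from last to first. -/
noncomputable def greedyLaw (p : V → ℝ) : List V → Finset V → ℝ
  | [] => Pi.single ∅ 1
  | k :: ks => greedyLaw p ks ᵥ* insertKernel (acceptProb G p (greedyLaw p ks) k) k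

variable {d : ℕ} {k : V}

namespace IsIndepLaw

lemma le_sum_disjoint_neighborFinset (hw : IsIndepLaw G p A w) (hd : ∀ v, G.degree v ≤ d)
    (hp : ∀ v, p v ≤ 1 / (2 * (d : ℝ) + 1)) (k : V) :
    ((d : ℝ) + 1) / (2 * d + 1) ≤ ∑ I with Disjoint (G.neighborFinset k) I, w I := by
  refine le_trans ?_ (hw.one_sub_le_sum_disjoint (by positivity) hp _)
  have hdeg : (#(G.neighborFinset k) : ℝ) ≤ d := by exact_mod_cast hd k
  calc ((d : ℝ) + 1) / (2 * d + 1) = 1 - d * (1 / (2 * d + 1)) := by field_simp; ring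
    _ ≤ _ := by gcongr

lemma acceptProb_mem_Icc (hw : IsIndepLaw G p A w) (hd : ∀ v, G.degree v ≤ d)
    (hp : ∀ v, p v ∈ Set.Icc 0 (1 / (2 * (d : ℝ) + 1))) (k : V) (I : Finset V) :
    acceptProb G p w k I ∈ Set.Icc 0 (1 / ((d : ℝ) + 1)) := by
  rw [acceptProb]
  split_ifs
  · have hfree := hw.le_sum_disjoint_neighborFinset hd (fun v ↦ (hp v).2) k
    have hfree_pos : 0 < ((d : ℝ) + 1) / (2 * d + 1) := by positivity
    refine ⟨div_nonneg (hp k).1 (hfree_pos.le.trans hfree), ?_⟩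
    calc _ ≤ 1 / (2 * (d : ℝ) + 1) / (((d : ℝ) + 1) / (2 * d + 1)) := by
          gcongr
          exact (hp k).2
      _ = 1 / ((d : ℝ) + 1) := by field_simp
  · exact ⟨le_rfl, by positivity⟩

lemma acceptProb_mem_unitInterval (hw : IsIndepLaw G p A w) (hd : ∀ v, G.degree v ≤ d)
    (hp : ∀ v, p v ∈ Set.Icc 0 (1 / (2 * (d : ℝ) + 1))) (k : V) (I : Finset V) :
    acceptProb G p w k I ∈ Set.Icc (0 : ℝ) 1 :=
  Set.Icc_subset_Icc_right (div_le_one_of_le₀ (by simp) (by positivity))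
    (hw.acceptProb_mem_Icc hd hp k I)

lemma hasBoundedDifferences_acceptProb (hw : IsIndepLaw G p A w) (hd : ∀ v, G.degree v ≤ d)
    (hp : ∀ v, p v ∈ Set.Icc 0 (1 / (2 * (d : ℝ) + 1))) (k : V) (B : Finset V) :
    HasBoundedDifferences B (acceptProb G p w k) (((1 / ((d : ℝ) + 1)) • G.adjMatrix ℝ).row k) := by
  intro v _ I
  obtain ⟨h₀, h₁⟩ := hw.acceptProb_mem_Icc hd hp k I
  by_cases hkv : G.Adj k v
  · have hzero : acceptProb G p w k (insert v I) = 0 := by simp [acceptProb, hkv]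
    simpa [hzero, hkv, abs_of_nonneg h₀] using h₁
  · simp [acceptProb, hkv]

lemma isIndepSet_of_vecMul_ne_zero (hw : IsIndepLaw G p A w) {J : Finset V}
    (hJ : (w ᵥ* insertKernel (acceptProb G p w k) k) J ≠ 0) : G.IsIndepSet J := by
  obtain ⟨I, hwI, rfl | ⟨rfl, hacc⟩⟩ := exists_of_vecMul_insertKernel_ne_zero hJ
  · exact hw.isIndepSet J hwI
  · have hfree : Disjoint (G.neighborFinset k) I := by
      by_contra h
      simp [acceptProb, h] at hacc
    rw [coe_insert, SimpleGraph.IsIndepSet, Set.pairwise_insert]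
    refine ⟨hw.isIndepSet I hwI, fun v hv _ ↦ ?_⟩
    have hkv : ¬ G.Adj k v := by
      simpa using fun h ↦ disjoint_left.1 hfree h hv
    exact ⟨hkv, fun h ↦ hkv h.symm⟩

lemma marginal_vecMul_self (hw : IsIndepLaw G p A w) (hk : k ∉ A)
    (hfree : ∑ I with Disjoint (G.neighborFinset k) I, w I ≠ 0) :
    ∑ I with k ∈ I, (w ᵥ* insertKernel (acceptProb G p w k) k) I = p k := by
  have hnotMem (I) (hI : k ∈ I) : w I = 0 := by
    by_contra hwI
    exact hk (hw.subset I hwI hI)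
  rw [sum_filter_mem_vecMul_insertKernel_self hnotMem]
  calc w ⬝ᵥ acceptProb G p w k
      = p k / (∑ J with Disjoint (G.neighborFinset k) J, w J) *
          ∑ I with Disjoint (G.neighborFinset k) I, w I := by
        rw [mul_sum, sum_filter, dotProduct]
        simp only [acceptProb, mul_ite, mul_zero, mul_comm]
    _ = p k := div_mul_cancel₀ _ hfree

end IsIndepLaw

lemma IsIndepLaw.vecMul_insertKernel (hw : IsIndepLaw G p A w) (hk : k ∉ A)
    (hd : ∀ v, G.degree v ≤ d) (hp : ∀ v, p v ∈ Set.Icc 0 (1 / (2 * (d : ℝ) + 1))) :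
    IsIndepLaw G p (insert k A) (w ᵥ* insertKernel (acceptProb G p w k) k) where
  mem_stdSimplex := vecMul_mem_stdSimplex hw.mem_stdSimplex
    (insertKernel_mem_rowStochastic (hw.acceptProb_mem_unitInterval hd hp k))
  subset J hJ := by
    obtain ⟨I, hwI, rfl | ⟨rfl, -⟩⟩ := exists_of_vecMul_insertKernel_ne_zero hJ
    · exact (hw.subset J hwI).trans (subset_insert k A)
    · exact insert_subset_insert k (hw.subset I hwI)
  isIndepSet _ := hw.isIndepSet_of_vecMul_ne_zero
  marginal v hv := by
    rcases eq_or_ne v k with rfl | hvk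
    · refine hw.marginal_vecMul_self hk (ne_of_gt ?_)
      exact lt_of_lt_of_le (by positivity)
        (hw.le_sum_disjoint_neighborFinset hd (fun v ↦ (hp v).2) v)
    · rw [sum_filter_mem_vecMul_insertKernel_of_ne hvk]
      exact hw.marginal v (mem_of_mem_insert_of_ne hv hvk)

lemma isIndepLaw_greedyLaw (hd : ∀ v, G.degree v ≤ d)
    (hp : ∀ v, p v ∈ Set.Icc 0 (1 / (2 * (d : ℝ) + 1))) {ks : List V} (hks : ks.Nodup) :
    IsIndepLaw G p ks.toFinset (greedyLaw G p ks) := by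
  induction ks with
  | nil => exact isIndepLaw_single_empty G p
  | cons k ks ih =>
    obtain ⟨hk, hks⟩ := List.nodup_cons.1 hks
    rw [List.toFinset_cons]
    exact (ih hks).vecMul_insertKernel (by simpa using hk) hd hp

lemma greedyLaw_dotProduct_exp_le_influence (hd : ∀ v, G.degree v ≤ d)
    (hp : ∀ v, p v ∈ Set.Icc 0 (1 / (2 * (d : ℝ) + 1))) {ks : List V} (hks : ks.Nodup)
    {f : Finset V → ℝ} {l c : V → ℝ} (hf : HasBoundedDifferences ks.toFinset f l)
    (hc : c = influence ((1 / ((d : ℝ) + 1)) • G.adjMatrix ℝ) ks l) :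
    (greedyLaw G p ks ⬝ᵥ fun I ↦ exp (f I)) ≤
      exp (greedyLaw G p ks ⬝ᵥ f + c ⬝ᵥ c / 8) := by
  subst hc
  induction ks generalizing f l with
  | nil => simp [greedyLaw, influence]
  | cons k ks ih =>
    obtain ⟨hk, hks⟩ := List.nodup_cons.1 hks
    rw [List.toFinset_cons] at hf
    have hlaw := isIndepLaw_greedyLaw hd hp hks
    have hacc := hlaw.acceptProb_mem_unitInterval hd hp k
    have hstep := vecMul_insertKernel_dotProduct_exp_le hlaw.mem_stdSimplex.1 hacc
      (hf k (mem_insert_self k _))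
    have hind := ih hks (hf.insertKernel_mulVec
      (hlaw.hasBoundedDifferences_acceptProb hd hp k _) hacc)
    rw [dotProduct_mulVec] at hind
    rw [influence_cons_dotProduct_self hk, greedyLaw, add_div, add_left_comm, Real.exp_add]
    exact hstep.trans (mul_le_mul_of_nonneg_left hind (Real.exp_nonneg _))

lemma greedyLaw_dotProduct_exp_le (hd : ∀ v, G.degree v ≤ d)
    (hp : ∀ v, p v ∈ Set.Icc 0 (1 / (2 * (d : ℝ) + 1))) {ks : List V} (hks : ks.Nodup)
    {f : Finset V → ℝ} {l : V → ℝ} (hf : HasBoundedDifferences ks.toFinset f l) :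
    (greedyLaw G p ks ⬝ᵥ fun I ↦ exp (f I)) ≤
      exp (greedyLaw G p ks ⬝ᵥ f + l ⬝ᵥ l / 2) := by
  refine (greedyLaw_dotProduct_exp_le_influence hd hp hks hf rfl).trans ?_
  have hM (x : V → ℝ) : x ⬝ᵥ ((1 / ((d : ℝ) + 1)) • G.adjMatrix ℝ) *ᵥ x ≤ x ⬝ᵥ x := by
    rw [smul_mulVec, dotProduct_smul, smul_eq_mul, div_mul_eq_mul_div, one_mul,
      div_le_iff₀ (by positivity)]
    have : 0 ≤ x ⬝ᵥ x := sum_nonneg fun v _ ↦ mul_self_nonneg _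
    linarith [dotProduct_adjMatrix_mulVec_le G hd x]
  have := influence_dotProduct_self_le ((G.isSymm_adjMatrix (α := ℝ)).smul _) (by simp) hM hks l
  gcongr exp (_ + ?_)
  linarith

lemma greedyLaw_sum_filter_lt_exp (hd : ∀ v, G.degree v ≤ d)
    (hp : ∀ v, p v ∈ Set.Icc 0 (1 / (2 * (d : ℝ) + 1))) {ks : List V} (hks : ks.Nodup)
    {f : Finset V → ℝ} {l : V → ℝ} (hf : HasBoundedDifferences ks.toFinset f l) {t : ℝ}
    (ht : 0 < t) :
    ∑ I with greedyLaw G p ks ⬝ᵥ f + t < f I, greedyLaw G p ks I <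
      exp (-t ^ 2 / (2 * (l ⬝ᵥ l))) := by
  have hl : 0 ≤ l ⬝ᵥ l := sum_nonneg fun v _ ↦ mul_self_nonneg _
  refine sum_filter_lt_exp_of_mgf_le (isIndepLaw_greedyLaw hd hp hks).mem_stdSimplex
    hl ht fun a _ ↦ ?_
  refine (greedyLaw_dotProduct_exp_le hd hp hks (hf.const_smul a)).trans_eq ?_
  simp only [dotProduct_smul, smul_dotProduct, smul_eq_mul, ← mul_assoc, abs_mul_abs_self, sq]

end Greedy

theorem exists_random_independent_set_general {V : Type*} [Fintype V] [DecidableEq V]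
    (G : SimpleGraph V) [DecidableRel G.Adj] (d : ℕ) (hd : ∀ v : V, G.degree v ≤ d)
    (p : V → ℝ) (hp : ∀ v, p v ∈ Set.Icc 0 (1 / (2 * (d : ℝ) + 1))) :
    ∃ w : Finset V → ℝ,
      (∀ I, 0 ≤ w I) ∧ ∑ I, w I = 1 ∧
      (∀ I : Finset V, w I ≠ 0 → G.IsIndepSet I) ∧
      (∀ v, ∑ I with v ∈ I, w I = p v) ∧
      ∀ (S : Finset V) (t : ℝ), 0 < t →
        ∑ I with ∑ v ∈ S, p v + t < (#(S ∩ I) : ℝ), w I < exp (-t ^ 2 / (2 * #S)) ∧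
        ∑ I with (#(S ∩ I) : ℝ) < ∑ v ∈ S, p v - t, w I < exp (-t ^ 2 / (2 * #S)) := by
  have hnodup : (univ : Finset V).toList.Nodup := nodup_toList univ
  have hw := isIndepLaw_greedyLaw hd hp hnodup
  set w := greedyLaw G p univ.toList
  have hmarg (v : V) : ∑ I with v ∈ I, w I = p v := hw.marginal v (by simp)
  refine ⟨w, hw.mem_stdSimplex.1, hw.mem_stdSimplex.2, hw.isIndepSet, hmarg, fun S t ht ↦ ?_⟩
  have hmean : (w ⬝ᵥ fun I ↦ (#(S ∩ I) : ℝ)) = ∑ v ∈ S, p v := by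
    simp_rw [dotProduct_card_inter, hmarg]
  have hf := hasBoundedDifferences_card_inter (univ.toList.toFinset : Finset V) S
  have hupper := greedyLaw_sum_filter_lt_exp hd hp hnodup hf ht
  have hlower := greedyLaw_sum_filter_lt_exp hd hp hnodup hf.neg ht
  have hsq : (fun v ↦ if v ∈ S then (1 : ℝ) else 0) ⬝ᵥ (fun v ↦ if v ∈ S then 1 else 0) = #S := by
    simp [dotProduct]
  rw [dotProduct_neg, hmean, hsq] at hlower
  rw [hmean, hsq] at hupper
  have htail (I : Finset V) :
      (#(S ∩ I) : ℝ) < ∑ v ∈ S, p v - t ↔ -∑ v ∈ S, p v + t < -(#(S ∩ I) : ℝ) := by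
    rw [lt_neg, neg_add', neg_neg]
  simp only [htail]
  exact ⟨hupper, hlower⟩

/-- There is a random independent set `I` of a graph of maximum degree at most `d`
(modelled as a weight function `w` on `Finset V` giving a probability distribution
supported on independent sets) with uniform marginals `p = 1/(2d+1)` and two-sided
Chernoff-type concentration of `|S ∩ I|` for every vertex set `S`. -/
theorem exists_random_independent_set {V : Type} [Fintype V] [DecidableEq V]
    (G : SimpleGraph V) [DecidableRel G.Adj] (n d : ℕ)
    (hn : Fintype.card V = n) (hd : ∀ v : V, G.degree v ≤ d) :
    ∃ w : Finset V → ℝ,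
      (∀ I, 0 ≤ w I) ∧ (∑ I : Finset V, w I) = 1 ∧
      (∀ I : Finset V, w I ≠ 0 → ∀ u ∈ I, ∀ v ∈ I, ¬ G.Adj u v) ∧
      (∀ v : V,
        (∑ I ∈ Finset.univ.filter (fun I : Finset V => v ∈ I), w I)
          = 1 / (2 * (d : ℝ) + 1)) ∧
      ∀ (S : Finset V) (t : ℝ), 0 < t →
        (∑ I ∈ Finset.univ.filter
            (fun I : Finset V =>
              ((S ∩ I).card : ℝ) > (S.card : ℝ) / (2 * (d : ℝ) + 1) + t), w I)
          < Real.exp (-(t ^ 2) / (9 * (S.card : ℝ))) ∧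
        (∑ I ∈ Finset.univ.filter
            (fun I : Finset V =>
              ((S ∩ I).card : ℝ) < (S.card : ℝ) / (2 * (d : ℝ) + 1) - t), w I)
          < Real.exp (-(t ^ 2) / (9 * (S.card : ℝ))) := by
  obtain ⟨w, hnonneg, hsum, hindep, hmarg, hconc⟩ :=
    exists_random_independent_set_general G d hd (fun _ ↦ 1 / (2 * (d : ℝ) + 1))
      fun _ ↦ ⟨by positivity, le_rfl⟩
  refine ⟨w, hnonneg, hsum, fun I hI u hu v hv huv ↦ hindep I hI hu hv huv.ne huv, hmarg,
    fun S t ht ↦ ?_⟩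
  have hexp : exp (-t ^ 2 / (2 * #S)) ≤ exp (-(t ^ 2) / (9 * (#S : ℝ))) := by
    rcases S.eq_empty_or_nonempty with rfl | hS
    · simp
    · have := hS.card_pos
      rw [neg_div, neg_div]
      gcongr
      norm_num
  simpa [div_eq_mul_inv] using (hconc S t ht).imp (·.trans_le hexp) (·.trans_le hexp)
end
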